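/- Let G = 𝔽₂ⁿ and let X, Y be finitely supported G-valued random variables. There exists a subspace V ⊆ G such that H[𝐔_V] ≤ 7 (H[X] + H[Y]) and max{H[π_V(X)], H[π_V(Y)]} ≤ 12 d[X; Y]. -/

import Mathlib

/-!
The theorem follows from the entropic polynomial Freiman–Ruzsa theorem of Gowers, Green, Manners
and Tao: some subspace `V` has `d[X; 𝐔_V] + d[Y; 𝐔_V] ≤ 11 d[X; Y]`. Indeed
`H[π_V(X)] ≤ 2 d[X; 𝐔_V]`, because the coset of `X` can be read off from `X + 𝐔_V`, and
`H[𝐔_V] ≤ 2 d[X; 𝐔_V] + H[X]`.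

To find `V`, minimise `d[X'; Y'] + η (d[X; X'] + d[Y; Y'])` with `η = 1/9`. Let `a, c` be copies of
`X'` and `b, d` copies of `Y'`, all independent. Comparing the minimum with its values at sums such
as `a + c` and `b + d`, and at `a` and `b` conditioned on such sums (fibring), bounds
`H[a + b, b + c, a + b + c + d]` from below. On the other hand `a + b`, `b + c` and `a + c` sum to
zero, and the Balog–Szemerédi–Gowers argument applied to two of them, given `a + b + c + d`, bounds
this entropy from above. The bounds are compatible only if `d[X'; Y'] = 0`, which makes `X'` uniform
on a coset of a subspace.
-/

open Real Pointwise

noncomputable section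

abbrev Fvec (n : ℕ) : Type := Fin n → ZMod 2

/-- Shannon entropy (natural log) of a finitely supported distribution. -/
def ent {A : Type*} (p : A → ℝ) : ℝ := ∑ᶠ a, Real.negMulLog (p a)

/-- `p` is a (finitely supported) probability distribution. -/
def IsDist {A : Type*} (p : A → ℝ) : Prop := (∀ a, 0 ≤ p a) ∧ ∑ᶠ a, p a = 1

/-- Pushforward of a distribution along a map: the distribution of `f(X)` for `X ∼ p`. -/
def push {A B : Type*} (f : A → B) (p : A → ℝ) : B → ℝ := fun b => ∑ᶠ a ∈ f ⁻¹' {b}, p a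

/-- Joint distribution of a pair of independent random variables. -/
def prodDist {A B : Type*} (p : A → ℝ) (q : B → ℝ) : A × B → ℝ := fun z => p z.1 * q z.2

/-- Distribution of `X + Y` for independent `X ∼ p`, `Y ∼ q`. -/
def conv {A : Type*} [AddGroup A] (p q : A → ℝ) : A → ℝ := fun z => ∑ᶠ x, p x * q (z - x)

/-- The distribution of `X` conditioned on `U = b`, where `r` is the joint distribution of `(X, U)`. -/
def fiber {A B : Type*} (r : A × B → ℝ) (b : B) : A → ℝ := fun a => r (a, b) / push Prod.snd r b

/-- Conditional entropy `H[X | U]` of a joint distribution `r` of `(X, U)`. -/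
def condEnt {A B : Type*} (r : A × B → ℝ) : ℝ := ∑ᶠ b, push Prod.snd r b * ent (fiber r b)

/-- Doubling mass `s[X ; Y]` (of independent copies with distributions `p`, `q`). -/
def sDouble {A : Type*} [AddGroup A] (p q : A → ℝ) : ℝ := ent p + ent q - ent (conv p q)

/-- Conditional doubling mass `s[X | U ; Y | W] = 𝔼_{u ∼ U, w ∼ W} s[X_u ; Y_w]`,
where `r1`, `r2` are the joint distributions of `(X, U)` and `(Y, W)`. -/
def sCond {A U W : Type*} [AddGroup A] (r1 : A × U → ℝ) (r2 : A × W → ℝ) : ℝ :=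
  ∑ᶠ u, ∑ᶠ w, push Prod.snd r1 u * push Prod.snd r2 w * sDouble (fiber r1 u) (fiber r2 w)

/-- Conditional mutual information `I[A : B | S]` of a joint distribution of `(A, B, S)`. -/
def condMI {A B S : Type*} (r : A × B × S → ℝ) : ℝ :=
  ent (push (fun z => (z.1, z.2.2)) r) + ent (push (fun z => z.2) r)
    - ent r - ent (push (fun z => z.2.2) r)

/-- Uniform distribution on a set. -/
def unifOn {A : Type*} (s : Set A) : A → ℝ := s.indicator fun _ => (Nat.card s : ℝ)⁻¹

/-- Entropic Ruzsa distance `d[X ; Y]`. -/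
def dRuzsa {A : Type*} [AddGroup A] (p q : A → ℝ) : ℝ := ent (conv p q) - ent p / 2 - ent q / 2

/-- Joint distribution of `(X, X + Y)` for independent `X ∼ p`, `Y ∼ q`. -/
def jointSum {A : Type*} [AddGroup A] (p q : A → ℝ) : A × A → ℝ :=
  push (fun z : A × A => (z.1, z.1 + z.2)) (prodDist p q)

/-- Joint distribution of `(X, π_V(X))`. -/
def selfProj {n : ℕ} (V : Submodule (ZMod 2) (Fvec n)) (p : Fvec n → ℝ) :
    Fvec n × (Fvec n ⧸ V) → ℝ := push (fun x => (x, V.mkQ x)) p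

/-- Joint distribution of independent `(X₁, X₂, Y₁, Y₂)` with `X₁, X₂ ∼ p` and `Y₁, Y₂ ∼ q`. -/
def quad {A : Type*} (p q : A → ℝ) : A × A × A × A → ℝ :=
  fun z => p z.1 * p z.2.1 * q z.2.2.1 * q z.2.2.2

/-- Distribution of `X₁ + ⋯ + X_k` for independent `Xᵢ ∼ p i`. -/
def indepSum {A : Type*} [AddCommGroup A] (k : ℕ) (p : Fin k → A → ℝ) : A → ℝ :=
  push (fun x : Fin k → A => ∑ i, x i) (fun x => ∏ i, p i (x i))

/-- Statement `A(η, L, c)` from the paper. -/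
def StA (η L c : ℝ) : Prop :=
  ∀ (n : ℕ) (p q : Fvec n → ℝ), IsDist p → IsDist q →
    ent (conv p q) ≤ (1 - η) * (ent p + ent q) →
    ∃ V : Submodule (ZMod 2) (Fvec n),
      ent (unifOn (V : Set (Fvec n))) ≤ L * (ent p + ent q) ∧
      ent (push V.mkQ p) + ent (push V.mkQ q) ≤ (1 - c) * (ent p + ent q)

/-- Statement `B(η, ε, L)` from the paper. -/
def StB (η ε L : ℝ) : Prop :=
  ∀ (n : ℕ) (p q : Fvec n → ℝ), IsDist p → IsDist q →
    ∃ V : Submodule (ZMod 2) (Fvec n),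
      ent (unifOn (V : Set (Fvec n))) ≤ L * (ent p + ent q) ∧
      ent (conv (push V.mkQ p) (push V.mkQ q)) ≥
        (1 - η) * (ent (push V.mkQ p) + ent (push V.mkQ q)) - ε * (ent p + ent q)

/-- Entropy of the random variable `X` on the finite probability space `(Ω, w)`. -/
notation "H[" X ";" w "]" => ent (push X w)

section Push

variable {Ω A B : Type*}

lemma ent_eq_sum [Fintype A] (p : A → ℝ) : ent p = ∑ a, negMulLog (p a) :=
  finsum_eq_sum_of_fintype _

lemma isDist_iff [Fintype A] {p : A → ℝ} : IsDist p ↔ (∀ a, 0 ≤ p a) ∧ ∑ a, p a = 1 := by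
  rw [IsDist, finsum_eq_sum_of_fintype]

lemma push_apply [Fintype Ω] [DecidableEq A] (X : Ω → A) (w : Ω → ℝ) (a : A) :
    push X w a = ∑ ω, if X ω = a then w ω else 0 := by
  simp only [push, finsum_eq_sum_of_fintype, Set.mem_preimage, Set.mem_singleton_iff,
    finsum_eq_if]

lemma sum_push_mul [Fintype Ω] [Fintype A] (X : Ω → A) (w : Ω → ℝ) (g : A → ℝ) :
    ∑ a, push X w a * g a = ∑ ω, w ω * g (X ω) := by
  classical
  simp_rw [push_apply, Finset.sum_mul]
  rw [Finset.sum_comm]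
  simp only [ite_mul, zero_mul, Finset.sum_ite_eq, Finset.mem_univ, if_true]

lemma sum_push [Fintype Ω] [Fintype A] (X : Ω → A) (w : Ω → ℝ) :
    ∑ a, push X w a = ∑ ω, w ω := by
  simpa only [mul_one] using sum_push_mul X w fun _ => 1

lemma push_push [Finite Ω] [Finite A] (f : A → B) (X : Ω → A) (w : Ω → ℝ) :
    push f (push X w) = push (fun ω => f (X ω)) w := by
  classical
  cases nonempty_fintype Ω
  cases nonempty_fintype A
  ext b
  simpa only [push_apply, mul_ite, mul_one, mul_zero] using
    sum_push_mul X w fun a => if f a = b then 1 else 0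

lemma push_id (w : Ω → ℝ) : push id w = w := by
  ext a
  simp only [push, Set.preimage_id, finsum_mem_singleton]

lemma push_equiv (e : Ω ≃ A) (w : Ω → ℝ) : push e w = fun a => w (e.symm a) := by
  ext a
  simp only [push, Set.mem_preimage, Set.mem_singleton_iff, ← Equiv.eq_symm_apply,
    finsum_cond_eq_left]

lemma push_fst_apply [Finite A] [Fintype B] (r : A × B → ℝ) (a : A) :
    push Prod.fst r a = ∑ b, r (a, b) := by
  classical
  cases nonempty_fintype A
  simp only [push_apply, Fintype.sum_prod_type_right, Finset.sum_ite_eq', Finset.mem_univ, if_true]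

lemma push_snd_apply [Fintype A] [Finite B] (r : A × B → ℝ) (b : B) :
    push Prod.snd r b = ∑ a, r (a, b) := by
  classical
  cases nonempty_fintype B
  simp only [push_apply, Fintype.sum_prod_type, Finset.sum_ite_eq', Finset.mem_univ, if_true]

lemma push_nonneg {w : Ω → ℝ} (hw : ∀ ω, 0 ≤ w ω) (X : Ω → A) (a : A) : 0 ≤ push X w a :=
  finsum_mem_induction (0 ≤ ·) le_rfl (fun _ _ => add_nonneg) fun ω _ => hw ω

lemma le_push [Finite Ω] {w : Ω → ℝ} (hw : ∀ ω, 0 ≤ w ω) (X : Ω → A) (ω : Ω) :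
    w ω ≤ push X w (X ω) := by
  classical
  cases nonempty_fintype Ω
  rw [push_apply]
  have h := Finset.single_le_sum (f := fun ω' => if X ω' = X ω then w ω' else 0)
    (fun ω' _ => ite_nonneg (hw ω') le_rfl) (Finset.mem_univ ω)
  simpa only [if_true] using h

lemma push_pos [Finite Ω] {w : Ω → ℝ} (hw : ∀ ω, 0 ≤ w ω) (X : Ω → A) {ω : Ω} (hω : w ω ≠ 0) :
    0 < push X w (X ω) :=
  ((hw ω).lt_of_ne' hω).trans_le (le_push hw X ω)

protected lemma IsDist.push [Finite Ω] [Finite A] {w : Ω → ℝ} (hw : IsDist w) (X : Ω → A) :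
    IsDist (push X w) := by
  cases nonempty_fintype Ω
  cases nonempty_fintype A
  rw [isDist_iff] at hw ⊢
  exact ⟨push_nonneg hw.1 X, (sum_push X w).trans hw.2⟩

lemma IsDist.exists_ne_zero {w : Ω → ℝ} (hw : IsDist w) : ∃ ω, w ω ≠ 0 := by
  by_contra! h
  simpa only [h, finsum_zero, zero_ne_one] using hw.2

lemma ent_nonneg [Finite A] {p : A → ℝ} (hp : IsDist p) : 0 ≤ ent p := by
  cases nonempty_fintype A
  rw [isDist_iff] at hp
  rw [ent_eq_sum]
  refine Finset.sum_nonneg fun a _ => negMulLog_nonneg (hp.1 a) ?_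
  exact hp.2 ▸ Finset.single_le_sum (fun b _ => hp.1 b) (Finset.mem_univ a)

lemma ent_push_eq_sum [Fintype Ω] [Finite A] (X : Ω → A) (w : Ω → ℝ) :
    H[X; w] = ∑ ω, w ω * -log (push X w (X ω)) := by
  cases nonempty_fintype A
  rw [ent_eq_sum, ← sum_push_mul X w fun a => -log (push X w a)]
  simp only [negMulLog, neg_mul, mul_neg]

lemma ent_push_congr [Finite Ω] [Finite A] [Finite B] {w : Ω → ℝ} {X : Ω → A} {Y : Ω → B}
    (h : ∀ ω ω', w ω ≠ 0 → w ω' ≠ 0 → (X ω = X ω' ↔ Y ω = Y ω')) : H[X; w] = H[Y; w] := by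
  classical
  cases nonempty_fintype Ω
  simp only [ent_push_eq_sum, push_apply]
  refine Finset.sum_congr rfl fun ω _ => ?_
  by_cases hω : w ω = 0
  · simp only [hω, zero_mul]
  congr 3
  refine Finset.sum_congr rfl fun ω' _ => ?_
  by_cases hω' : w ω' = 0
  · simp only [hω', ite_self]
  · simp only [h ω' ω hω' hω]

lemma ent_push_of_injective [Finite Ω] [Finite A] {X : Ω → A} (hX : X.Injective) (w : Ω → ℝ) :
    H[X; w] = ent w := by
  rw [← push_id w, push_push]
  exact ent_push_congr fun ω ω' _ _ => hX.eq_iff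

end Push

section Independence

variable {A B C D : Type*}

lemma sum_prodDist [Fintype A] [Fintype B] (p : A → ℝ) (q : B → ℝ) :
    ∑ z, prodDist p q z = (∑ a, p a) * ∑ b, q b := by
  simp only [prodDist, Fintype.sum_prod_type, Finset.sum_mul_sum]

protected lemma IsDist.prodDist [Finite A] [Finite B] {p : A → ℝ} {q : B → ℝ} (hp : IsDist p)
    (hq : IsDist q) : IsDist (prodDist p q) := by
  cases nonempty_fintype A
  cases nonempty_fintype B
  rw [isDist_iff] at hp hq ⊢
  exact ⟨fun z => mul_nonneg (hp.1 z.1) (hq.1 z.2), by rw [sum_prodDist, hp.2, hq.2, one_mul]⟩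

lemma push_prodMap_prodDist [Finite A] [Finite B] [Finite C] [Finite D] (f : A → C) (g : B → D)
    (p : A → ℝ) (q : B → ℝ) :
    push (fun z => (f z.1, g z.2)) (prodDist p q) = prodDist (push f p) (push g q) := by
  classical
  cases nonempty_fintype A
  cases nonempty_fintype B
  ext ⟨c, d⟩
  simp only [prodDist, push_apply, Fintype.sum_prod_type, Finset.sum_mul_sum, Prod.mk.injEq,
    ite_and]
  refine Finset.sum_congr rfl fun a _ => Finset.sum_congr rfl fun b _ => ?_
  split_ifs <;> simp only [mul_zero, zero_mul]

lemma push_fst_prodDist [Finite A] [Finite B] (p : A → ℝ) {q : B → ℝ} (hq : IsDist q) :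
    push Prod.fst (prodDist p q) = p := by
  cases nonempty_fintype A
  cases nonempty_fintype B
  ext a
  rw [push_fst_apply]
  simp only [prodDist, ← Finset.mul_sum, (isDist_iff.1 hq).2, mul_one]

lemma push_swap_prodDist (p : A → ℝ) (q : B → ℝ) :
    push Prod.swap (prodDist p q) = prodDist q p :=
  (push_equiv (Equiv.prodComm A B) _).trans <| funext fun _ => mul_comm _ _

lemma push_prodAssoc_prodDist (p : A → ℝ) (q : B → ℝ) (r : C → ℝ) :
    push (Equiv.prodAssoc A B C) (prodDist (prodDist p q) r) = prodDist p (prodDist q r) :=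
  (push_equiv _ _).trans <| funext fun _ => mul_assoc _ _ _

lemma ent_prodDist [Finite A] [Finite B] {p : A → ℝ} {q : B → ℝ} (hp : IsDist p) (hq : IsDist q) :
    ent (prodDist p q) = ent p + ent q := by
  cases nonempty_fintype A
  cases nonempty_fintype B
  rw [isDist_iff] at hp hq
  simp only [ent_eq_sum, prodDist, negMulLog_mul, Fintype.sum_prod_type, Finset.sum_add_distrib,
    ← Finset.mul_sum, ← Finset.sum_mul, hp.2, hq.2, one_mul]

end Independence

section Shannon

variable {Ω A B C : Type*}

lemma ent_le_sum_mul_neg_log [Fintype A] {p q : A → ℝ} (hp : ∀ a, 0 ≤ p a) (hq : ∀ a, 0 ≤ q a)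
    (hpq : ∀ a, q a = 0 → p a = 0) (hsum : ∑ a, q a ≤ ∑ a, p a) :
    ent p ≤ ∑ a, p a * -log (q a) := by
  have pointwise (a : A) : negMulLog (p a) ≤ p a * -log (q a) + (q a - p a) := by
    rcases (hp a).eq_or_lt' with hpa | hpa
    · simpa only [hpa, negMulLog_zero, zero_mul, zero_add, sub_zero] using hq a
    have hqa : 0 < q a := (hq a).lt_of_ne' (mt (hpq a) hpa.ne')
    have hlog := mul_le_mul_of_nonneg_left (log_le_sub_one_of_pos (div_pos hqa hpa)) hpa.le
    rw [log_div hqa.ne' hpa.ne', mul_sub_one, mul_div_cancel₀ _ hpa.ne'] at hlog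
    rw [negMulLog]
    linarith
  have total := Finset.sum_le_sum fun a (_ : a ∈ Finset.univ) => pointwise a
  rw [Finset.sum_add_distrib, Finset.sum_sub_distrib, ← ent_eq_sum] at total
  linarith

lemma condEnt_eq [Finite A] [Finite B] {r : A × B → ℝ} (hr : ∀ t, 0 ≤ r t) :
    condEnt r = ent r - ent (push Prod.snd r) := by
  cases nonempty_fintype A
  cases nonempty_fintype B
  have chain_rule (b : B) : push Prod.snd r b * ent (fiber r b) =
      ∑ a, negMulLog (r (a, b)) - negMulLog (push Prod.snd r b) := by
    have marginal : ∑ a, r (a, b) = push Prod.snd r b := (push_snd_apply r b).symm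
    rcases eq_or_ne (push Prod.snd r b) 0 with h | h
    · rw [h, Finset.sum_eq_zero_iff_of_nonneg fun a _ => hr _] at marginal
      simp only [h, zero_mul, negMulLog_zero, sub_zero]
      exact (Finset.sum_eq_zero fun a ha => by rw [marginal a ha, negMulLog_zero]).symm
    · have split (a : A) : negMulLog (r (a, b)) = r (a, b) / push Prod.snd r b *
          negMulLog (push Prod.snd r b) +
            push Prod.snd r b * negMulLog (r (a, b) / push Prod.snd r b) := by
        rw [← negMulLog_mul, mul_div_cancel₀ _ h]
      simp only [split, Finset.sum_add_distrib, ← Finset.sum_mul, ← Finset.sum_div, marginal,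
        div_self h, one_mul, ← Finset.mul_sum, ent_eq_sum, fiber, add_sub_cancel_left]
  rw [condEnt, finsum_eq_sum_of_fintype, Finset.sum_congr rfl fun b _ => chain_rule b,
    Finset.sum_sub_distrib, ent_eq_sum, ent_eq_sum, Fintype.sum_prod_type_right]

/-- The joint law of `(X, Y, Z)` in which `(X, Z)` has law `f`, `(Y, Z)` has law `g`, and `X`, `Y`
are conditionally independent given `Z`. It has these marginals only if `f` and `g` have the same
second marginal; the value at a point where that marginal vanishes is `0`. -/
def condProd (f : A × C → ℝ) (g : B × C → ℝ) : A × B × C → ℝ :=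
  fun t => f (t.1, t.2.2) * g t.2 / push Prod.snd f t.2.2

lemma condProd_nonneg {f : A × C → ℝ} {g : B × C → ℝ} (hf : ∀ t, 0 ≤ f t) (hg : ∀ t, 0 ≤ g t)
    (t : A × B × C) : 0 ≤ condProd f g t :=
  div_nonneg (mul_nonneg (hf _) (hg _)) (push_nonneg hf _ _)

lemma apply_eq_zero_of_push_snd_eq_zero [Finite A] [Finite C] {f : A × C → ℝ}
    (hf : ∀ t, 0 ≤ f t) {a : A} {c : C} (hc : push Prod.snd f c = 0) : f (a, c) = 0 :=
  ((le_push hf Prod.snd (a, c)).trans hc.le).antisymm (hf _)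

lemma push_fst_thd_condProd [Finite A] [Finite B] [Finite C] {f : A × C → ℝ} {g : B × C → ℝ}
    (hf : ∀ t, 0 ≤ f t) (hfg : push Prod.snd f = push Prod.snd g) :
    push (fun t => (t.1, t.2.2)) (condProd f g) = f := by
  classical
  cases nonempty_fintype A
  cases nonempty_fintype B
  cases nonempty_fintype C
  ext ⟨a, c⟩
  have sum_g : ∑ b, g (b, c) = push Prod.snd f c := by rw [hfg, push_snd_apply]
  have marginal : push (fun t => (t.1, t.2.2)) (condProd f g) (a, c) =
      f (a, c) * push Prod.snd f c / push Prod.snd f c := by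
    simp only [push_apply (fun t : A × B × C => (t.1, t.2.2)), Fintype.sum_prod_type,
      Prod.mk.injEq, ite_and, Finset.sum_ite_eq', Finset.sum_ite_irrel, Finset.sum_const_zero,
      Finset.mem_univ, if_true, condProd, ← Finset.sum_div, ← Finset.mul_sum, sum_g]
  rw [marginal]
  exact mul_div_cancel_of_imp (apply_eq_zero_of_push_snd_eq_zero hf)

lemma condProd_swap [Finite A] [Finite B] [Finite C] {f : A × C → ℝ} {g : B × C → ℝ}
    (hfg : push Prod.snd f = push Prod.snd g) :
    push (fun t => (t.2.1, t.1, t.2.2)) (condProd f g) = condProd g f := by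
  classical
  cases nonempty_fintype A
  cases nonempty_fintype B
  cases nonempty_fintype C
  ext ⟨b, a, c⟩
  simp only [push_apply (fun t : A × B × C => (t.2.1, t.1, t.2.2)), Fintype.sum_prod_type,
    Prod.mk.injEq, ite_and, Finset.sum_ite_eq', Finset.sum_ite_irrel, Finset.sum_const_zero,
    Finset.mem_univ, if_true, condProd, hfg, mul_comm]

lemma push_snd_condProd [Finite A] [Finite B] [Finite C] {f : A × C → ℝ} {g : B × C → ℝ}
    (hg : ∀ t, 0 ≤ g t) (hfg : push Prod.snd f = push Prod.snd g) :
    push Prod.snd (condProd f g) = g := by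
  rw [← condProd_swap hfg.symm, push_push]
  exact push_fst_thd_condProd hg hfg.symm

/-- The conditional product of the two marginals of `r` is the reference measure in Gibbs'
inequality. -/
lemma condMI_nonneg [Finite A] [Finite B] [Finite C] {r : A × B × C → ℝ} (hr : ∀ t, 0 ≤ r t) :
    0 ≤ condMI r := by
  cases nonempty_fintype A
  cases nonempty_fintype B
  cases nonempty_fintype C
  set f := push (fun t => (t.1, t.2.2)) r
  set g := push (fun t => t.2) r
  have marginal_f : push Prod.snd f = push (fun t => t.2.2) r := push_push _ _ _
  have marginal_g : push Prod.snd g = push (fun t => t.2.2) r := push_push _ _ _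
  have f_nonneg := push_nonneg hr fun t => (t.1, t.2.2)
  have g_nonneg := push_nonneg hr fun t => t.2
  have pos (t) (ht : r t ≠ 0) : 0 < f (t.1, t.2.2) ∧ 0 < g t.2 ∧ 0 < push Prod.snd f t.2.2 :=
    ⟨push_pos hr _ ht, push_pos hr (fun t => t.2) ht, marginal_f ▸ push_pos hr (fun t => t.2.2) ht⟩
  have gibbs : ent r ≤ ∑ t, r t * -log (condProd f g t) := by
    refine ent_le_sum_mul_neg_log hr (condProd_nonneg f_nonneg g_nonneg) (fun t ht => ?_) ?_
    · by_contra hne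
      obtain ⟨h₁, h₂, h₃⟩ := pos t hne
      exact (div_pos (mul_pos h₁ h₂) h₃).ne' ht
    · rw [← sum_push (fun t => (t.1, t.2.2)), push_fst_thd_condProd f_nonneg
        (marginal_f.trans marginal_g.symm), sum_push]
  have log_condProd (t) : r t * -log (condProd f g t) =
      r t * -log (f (t.1, t.2.2)) + r t * -log (g t.2) -
        r t * -log (push (fun t => t.2.2) r t.2.2) := by
    rcases eq_or_ne (r t) 0 with ht | ht
    · simp only [ht, zero_mul, add_zero, sub_zero]
    · obtain ⟨h₁, h₂, h₃⟩ := pos t ht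
      rw [condProd, log_div (mul_pos h₁ h₂).ne' h₃.ne', log_mul h₁.ne' h₂.ne', marginal_f]
      ring
  simp only [log_condProd, Finset.sum_sub_distrib, Finset.sum_add_distrib] at gibbs
  have ent_f : ent f = ∑ t, r t * -log (f (t.1, t.2.2)) := ent_push_eq_sum _ r
  have ent_g : ent g = ∑ t, r t * -log (g t.2) := ent_push_eq_sum _ r
  have ent_m := ent_push_eq_sum (fun t : A × B × C => t.2.2) r
  change 0 ≤ ent f + ent g - ent r - H[fun t => t.2.2; r]
  linarith

lemma ent_push_submodular [Finite Ω] [Finite A] [Finite B] [Finite C] {w : Ω → ℝ}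
    (hw : ∀ ω, 0 ≤ w ω) (X : Ω → A) (Y : Ω → B) (Z : Ω → C) :
    H[fun ω => (X ω, Y ω, Z ω); w] + H[Z; w] ≤
      H[fun ω => (X ω, Z ω); w] + H[fun ω => (Y ω, Z ω); w] := by
  have h := condMI_nonneg (push_nonneg hw fun ω => (X ω, Y ω, Z ω))
  simp only [condMI, push_push] at h
  linarith

lemma ent_condProd [Finite A] [Finite B] [Finite C] {f : A × C → ℝ} {g : B × C → ℝ}
    (hf : ∀ t, 0 ≤ f t) (hg : ∀ t, 0 ≤ g t) (hfg : push Prod.snd f = push Prod.snd g) :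
    ent (condProd f g) = ent f + ent g - ent (push Prod.snd f) := by
  cases nonempty_fintype A
  cases nonempty_fintype B
  cases nonempty_fintype C
  have log_condProd (t) : negMulLog (condProd f g t) =
      condProd f g t * -log (f (t.1, t.2.2)) + condProd f g t * -log (g t.2) -
        condProd f g t * -log (push Prod.snd f t.2.2) := by
    rcases eq_or_ne (condProd f g t) 0 with ht | ht
    · simp only [ht, negMulLog_zero, zero_mul, add_zero, sub_zero]
    · obtain ⟨h₁₂, h₃⟩ := div_ne_zero_iff.1 ht
      rw [negMulLog, condProd, log_div h₁₂ h₃, log_mul (left_ne_zero_of_mul h₁₂)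
        (right_ne_zero_of_mul h₁₂)]
      ring
  have hf_sum := ent_push_eq_sum (fun t => (t.1, t.2.2)) (condProd f g)
  have hg_sum := ent_push_eq_sum Prod.snd (condProd f g)
  have hm_sum := ent_push_eq_sum (fun t => t.2.2) (condProd f g)
  have hm : push (fun t => t.2.2) (condProd f g) = push Prod.snd f := by
    rw [← push_fst_thd_condProd hf hfg, push_push, push_fst_thd_condProd hf hfg]
  rw [push_fst_thd_condProd hf hfg] at hf_sum
  rw [push_snd_condProd hg hfg] at hg_sum
  rw [hm] at hm_sum
  rw [ent_eq_sum, hf_sum, hg_sum, hm_sum, ← Finset.sum_add_distrib, ← Finset.sum_sub_distrib]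
  exact Finset.sum_congr rfl fun t _ => log_condProd t

end Shannon

section CondProd

variable {A B C D : Type*}

lemma push_prodMap_condProd [Finite A] [Finite B] [Finite C] {A' B' : Type*} [Finite A'] [Finite B']
    (F : A → A') (G : B → B') (f : A × C → ℝ) (g : B × C → ℝ) :
    push (fun t => (F t.1, G t.2.1, t.2.2)) (condProd f g) =
      condProd (push (fun t => (F t.1, t.2)) f) (push (fun t => (G t.1, t.2)) g) := by
  classical
  cases nonempty_fintype A
  cases nonempty_fintype B
  cases nonempty_fintype C
  ext ⟨a, b, c⟩
  simp only [condProd, push_push, push_apply (fun _ : A × B × C => _),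
    push_apply (fun t : A × C => (F t.1, t.2)), push_apply (fun _ : B × C => _),
    Fintype.sum_prod_type, Prod.mk.injEq, ite_and, Finset.sum_ite_irrel, Finset.sum_ite_eq',
    Finset.sum_const_zero, Finset.mem_univ, if_true, Finset.sum_mul_sum, Finset.sum_div]
  refine Finset.sum_congr rfl fun a' _ => ?_
  by_cases ha : F a' = a <;>
    simp only [ha, if_true, if_false, mul_ite, mul_zero, ite_div, zero_div, zero_mul,
      ite_self, Finset.sum_const_zero]

lemma condProd_prodDist [Finite A] [Finite B] [Finite C] [Finite D] {P : A × C → ℝ} {Q : B × D → ℝ}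
    (hP : ∀ t, 0 ≤ P t) (hQ : ∀ t, 0 ≤ Q t) :
    push (fun z => (z.1.1, z.2.1, z.1.2, z.2.2)) (prodDist P Q) =
      condProd (push (fun z => (z.1.1, z.1.2, z.2.2)) (prodDist P Q))
        (push (fun z => (z.2.1, z.1.2, z.2.2)) (prodDist P Q)) := by
  classical
  cases nonempty_fintype A
  cases nonempty_fintype B
  cases nonempty_fintype C
  cases nonempty_fintype D
  have cond : push (fun z => (z.1.2, z.2.2)) (prodDist P Q) =
      prodDist (push Prod.snd P) (push Prod.snd Q) := push_prodMap_prodDist _ _ _ _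
  ext ⟨a, b, c, d⟩
  have joint : push (fun z => (z.1.1, z.2.1, z.1.2, z.2.2)) (prodDist P Q) (a, b, c, d) =
      P (a, c) * Q (b, d) :=
    congrFun (push_equiv ((Equiv.prodProdProdComm A C B D).trans (Equiv.prodAssoc A B (C × D))) _) _
  have left : push (fun z => (z.1.1, z.1.2, z.2.2)) (prodDist P Q) (a, c, d) =
      P (a, c) * push Prod.snd Q d := by
    simp only [push_apply (fun z : (A × C) × B × D => (z.1.1, z.1.2, z.2.2)), prodDist,
      Fintype.sum_prod_type, Prod.mk.injEq, ite_and, Finset.sum_ite_irrel, Finset.sum_ite_eq',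
      Finset.sum_const_zero, Finset.mem_univ, if_true, push_snd_apply, Finset.mul_sum]
  have right : push (fun z => (z.2.1, z.1.2, z.2.2)) (prodDist P Q) (b, c, d) =
      push Prod.snd P c * Q (b, d) := by
    simp only [push_apply (fun z : (A × C) × B × D => (z.2.1, z.1.2, z.2.2)), prodDist,
      Fintype.sum_prod_type, Prod.mk.injEq, ite_and, Finset.sum_ite_irrel, Finset.sum_ite_eq',
      Finset.sum_const_zero, Finset.mem_univ, if_true, push_snd_apply, Finset.sum_mul]
  rw [condProd, push_push, joint, left, right, cond, prodDist]
  have rearrange : P (a, c) * push Prod.snd Q d * (push Prod.snd P c * Q (b, d)) =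
      P (a, c) * Q (b, d) * (push Prod.snd P c * push Prod.snd Q d) := by ring
  rw [rearrange]
  refine (mul_div_cancel_of_imp fun h => ?_).symm
  rcases mul_eq_zero.1 h with h | h
  · rw [apply_eq_zero_of_push_snd_eq_zero hP h, zero_mul]
  · rw [apply_eq_zero_of_push_snd_eq_zero hQ h, mul_zero]

end CondProd

section Conv

variable {G : Type*} [AddCommGroup G]

lemma conv_apply [Fintype G] (p q : G → ℝ) (z : G) : conv p q z = ∑ x, p x * q (z - x) :=
  finsum_eq_sum_of_fintype _

variable [Finite G]

lemma push_add_prodDist (p q : G → ℝ) : push (fun z => z.1 + z.2) (prodDist p q) = conv p q := by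
  classical
  cases nonempty_fintype G
  ext z
  simp only [push_apply, conv_apply, Fintype.sum_prod_type, prodDist, ← eq_sub_iff_add_eq',
    Finset.sum_ite_eq', Finset.mem_univ, if_true]

lemma push_add_prodMap_prodDist {A B : Type*} [Finite A] [Finite B] (f : A → G) (g : B → G)
    (p : A → ℝ) (q : B → ℝ) :
    push (fun z => f z.1 + g z.2) (prodDist p q) = conv (push f p) (push g q) := by
  rw [← push_add_prodDist, ← push_prodMap_prodDist, push_push]

lemma conv_comm (p q : G → ℝ) : conv p q = conv q p := by
  simp only [← push_add_prodDist, ← push_swap_prodDist q p, push_push, Prod.fst_swap,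
    Prod.snd_swap, add_comm]

lemma push_add_add_prodDist (p q r : G → ℝ) :
    push (fun z => z.1 + (z.2.1 + z.2.2)) (prodDist p (prodDist q r)) = conv p (conv q r) := by
  rw [← push_add_prodDist q r]
  exact (push_add_prodMap_prodDist id (fun z : G × G => z.1 + z.2) p _).trans (by rw [push_id])

lemma conv_left_comm (p q r : G → ℝ) : conv p (conv q r) = conv q (conv p r) := by
  cases nonempty_fintype G
  ext z
  simp only [conv_apply, Finset.mul_sum]
  rw [Finset.sum_comm]
  simp only [mul_left_comm, sub_right_comm]

protected lemma IsDist.conv {p q : G → ℝ} (hp : IsDist p) (hq : IsDist q) : IsDist (conv p q) :=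
  push_add_prodDist p q ▸ (hp.prodDist hq).push _

lemma ent_push_le {Ω A : Type*} [Finite Ω] [Finite A] {w : Ω → ℝ} (hw : ∀ ω, 0 ≤ w ω) (X : Ω → A) :
    H[X; w] ≤ ent w := by
  have h := ent_push_submodular hw id id X
  rw [ent_push_of_injective fun _ _ h => (Prod.ext_iff.1 h).1,
    ent_push_of_injective fun _ _ h => (Prod.ext_iff.1 h).1] at h
  linarith

lemma ent_conv_le {p q : G → ℝ} (hp : IsDist p) (hq : IsDist q) :
    ent (conv p q) ≤ ent p + ent q := by
  rw [← ent_prodDist hp hq, ← push_add_prodDist]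
  exact ent_push_le (hp.prodDist hq).1 _

lemma ent_conv_conv_add_le {p q r : G → ℝ} (hp : IsDist p) (hq : IsDist q) (hr : IsDist r) :
    ent (conv p (conv q r)) + ent q ≤ ent (conv p q) + ent (conv q r) := by
  have hw := hp.prodDist (hq.prodDist hr)
  have h := ent_push_submodular hw.1 Prod.fst (fun ω => ω.2.2) fun ω => ω.1 + (ω.2.1 + ω.2.2)
  have joint : H[fun ω => (ω.1, ω.2.2, ω.1 + (ω.2.1 + ω.2.2)); prodDist p (prodDist q r)] =
      ent p + (ent q + ent r) := by
    rw [ent_push_of_injective, ent_prodDist hp (hq.prodDist hr), ent_prodDist hq hr]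
    rintro ⟨x, y, z⟩ ⟨x', y', z'⟩
    simp only [Prod.mk.injEq]
    grind
  have left : H[fun ω => (ω.1, ω.1 + (ω.2.1 + ω.2.2)); prodDist p (prodDist q r)] =
      ent p + ent (conv q r) := by
    rw [← ent_prodDist hp (hq.conv hr), ← push_add_prodDist, ← push_id p, ← push_prodMap_prodDist,
      push_id]
    refine ent_push_congr fun ω ω' _ _ => ?_
    simp only [Prod.mk.injEq, id]
    grind
  have right : H[fun ω => (ω.2.2, ω.1 + (ω.2.1 + ω.2.2)); prodDist p (prodDist q r)] =
      ent (conv p q) + ent r := by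
    rw [← ent_prodDist (hp.conv hq) hr, ← push_add_prodDist p q, ← push_id r,
      ← push_prodMap_prodDist, ← push_prodAssoc_prodDist, push_push, push_id]
    refine ent_push_congr fun ω ω' _ _ => ?_
    simp only [Prod.mk.injEq, Equiv.prodAssoc_apply, id]
    grind
  rw [joint, left, right, push_add_add_prodDist] at h
  linarith

end Conv

section Jensen

variable {ι A G : Type*} [AddCommGroup G] [Finite G]

lemma sum_mul_ent_le [Fintype ι] [Finite A] {a : ι → ℝ} {p : ι → A → ℝ} (ha : ∀ i, 0 ≤ a i)
    (ha_sum : ∑ i, a i = 1) (hp : ∀ i x, 0 ≤ p i x) :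
    ∑ i, a i * ent (p i) ≤ ent fun x => ∑ i, a i * p i x := by
  cases nonempty_fintype A
  simp only [ent_eq_sum, Finset.mul_sum]
  rw [Finset.sum_comm]
  exact Finset.sum_le_sum fun x _ => concaveOn_negMulLog.le_map_sum (fun i _ => ha i) ha_sum
    fun i _ => hp i x

lemma ent_translate (p : G → ℝ) (x : G) : (ent fun z => p (z - x)) = ent p := by
  cases nonempty_fintype G
  simp only [ent_eq_sum]
  exact (Equiv.subRight x).sum_comp fun z => negMulLog (p z)

lemma ent_le_ent_conv_left {p q : G → ℝ} (hp : IsDist p) (hq : IsDist q) :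
    ent p ≤ ent (conv p q) := by
  cases nonempty_fintype G
  rw [isDist_iff] at hp hq
  have h := sum_mul_ent_le hq.1 hq.2 (p := fun y z => p (z - y)) fun y z => hp.1 _
  simp only [ent_translate, ← Finset.sum_mul, hq.2, one_mul, ← conv_apply] at h
  rwa [conv_comm]

lemma ent_le_ent_conv_right {p q : G → ℝ} (hp : IsDist p) (hq : IsDist q) :
    ent q ≤ ent (conv p q) :=
  conv_comm p q ▸ ent_le_ent_conv_left hq hp

/-- Equality case of Jensen's inequality for `conv p q`, an average of translates of `p`. -/
lemma apply_sub_eq_conv_apply {p q : G → ℝ} (hp : IsDist p) (hq : IsDist q)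
    (h : ent (conv p q) ≤ ent p) {y : G} (hy : q y ≠ 0) (z : G) : p (z - y) = conv p q z := by
  cases nonempty_fintype G
  rw [isDist_iff] at hp hq
  have jensen (z : G) : ∑ y, q y * negMulLog (p (z - y)) ≤ negMulLog (conv p q z) := by
    rw [conv_comm, conv_apply]
    exact concaveOn_negMulLog.le_map_sum (fun y _ => hq.1 y) hq.2 fun y _ => hp.1 (z - y)
  have average : ∑ z, ∑ y, q y * negMulLog (p (z - y)) = ent p := by
    rw [Finset.sum_comm]
    simp only [← Finset.mul_sum, ← ent_eq_sum, ent_translate, ← Finset.sum_mul, hq.2, one_mul]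
  have total : ∑ z, ∑ y, q y * negMulLog (p (z - y)) = ∑ z, negMulLog (conv p q z) :=
    (Finset.sum_le_sum fun z _ => jensen z).antisymm (by rwa [average, ← ent_eq_sum])
  have equality := (Finset.sum_eq_sum_iff_of_le fun z _ => jensen z).1 total z (Finset.mem_univ z)
  rw [conv_comm, conv_apply] at equality ⊢
  exact (strictConcaveOn_negMulLog.map_sum_eq_iff' (fun y _ => hq.1 y) hq.2
    fun y _ => hp.1 (z - y)).1 equality.symm y (Finset.mem_univ y) hy

end Jensen

section RuzsaDistance

variable {G : Type*} [AddCommGroup G] [Finite G] {p q r : G → ℝ}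

lemma dRuzsa_comm (p q : G → ℝ) : dRuzsa p q = dRuzsa q p := by
  rw [dRuzsa, dRuzsa, conv_comm]
  ring

lemma dRuzsa_nonneg (hp : IsDist p) (hq : IsDist q) : 0 ≤ dRuzsa p q := by
  rw [dRuzsa]
  linarith [ent_le_ent_conv_left hp hq, ent_le_ent_conv_right hp hq]

lemma dRuzsa_triangle (hp : IsDist p) (hq : IsDist q) (hr : IsDist r) :
    dRuzsa p r ≤ dRuzsa p q + dRuzsa q r := by
  have mono : ent (conv p r) ≤ ent (conv p (conv q r)) :=
    conv_left_comm p q r ▸ ent_le_ent_conv_right hq (hp.conv hr)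
  have kv := ent_conv_conv_add_le hp hq hr
  simp only [dRuzsa]
  linarith

lemma dRuzsa_translate (p q : G → ℝ) (x : G) : (dRuzsa p fun z => q (z - x)) = dRuzsa p q := by
  have h : (conv p fun z => q (z - x)) = fun z => conv p q (z - x) := by
    cases nonempty_fintype G
    ext z
    simp only [conv_apply, sub_right_comm]
  rw [dRuzsa, h, ent_translate, ent_translate, dRuzsa]

lemma dRuzsa_conv_le (hp : IsDist p) (hq : IsDist q) (hr : IsDist r) :
    dRuzsa p (conv q r) ≤ dRuzsa p q + (ent (conv q r) - ent q) / 2 := by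
  have kv := ent_conv_conv_add_le hp hq hr
  simp only [dRuzsa]
  linarith

end RuzsaDistance

section Uniform

variable {A G : Type*} [AddCommGroup G] [Finite G]

lemma sum_indicator_const [Fintype A] (s : Set A) (c : ℝ) :
    ∑ a, s.indicator (fun _ => c) a = Nat.card s * c := by
  classical
  simp only [Set.indicator_apply, Finset.sum_ite, Finset.sum_const, nsmul_eq_mul, mul_zero,
    add_zero, Nat.card_eq_fintype_card, Fintype.card_subtype]

lemma isDist_unifOn [Finite A] {s : Set A} (hs : s.Nonempty) : IsDist (unifOn s) := by
  cases nonempty_fintype A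
  have : Nonempty s := hs.to_subtype
  rw [isDist_iff]
  refine ⟨Set.indicator_nonneg fun _ _ => inv_nonneg.2 (Nat.cast_nonneg _), ?_⟩
  rw [unifOn, sum_indicator_const]
  exact mul_inv_cancel₀ (Nat.cast_ne_zero.2 Nat.card_pos.ne')

/-- The group of periods of `p`; it is the subgroup whose coset supports a law `p` with
`d[p; p] = 0`. -/
def periods (p : G → ℝ) : AddSubgroup G where
  carrier := {v | Function.Periodic p v}
  zero_mem' := Function.periodic_with_period_zero p
  add_mem' := Function.Periodic.add_period
  neg_mem' := Function.Periodic.neg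

lemma sub_mem_periods {p : G → ℝ} (hp : IsDist p) (h : dRuzsa p p ≤ 0) {y y' : G} (hy : p y ≠ 0)
    (hy' : p y' ≠ 0) : y - y' ∈ periods p := by
  have hent : ent (conv p p) ≤ ent p := by rw [dRuzsa] at h; linarith
  intro x
  rw [← add_sub_assoc, apply_sub_eq_conv_apply hp hp hent hy',
    ← apply_sub_eq_conv_apply hp hp hent hy, add_sub_cancel_right]

theorem exists_eq_translate_unifOn {p : G → ℝ} (hp : IsDist p) (h : dRuzsa p p ≤ 0) :
    ∃ (V : AddSubgroup G) (x : G), p = fun z => unifOn (V : Set G) (z - x) := by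
  cases nonempty_fintype G
  obtain ⟨x, hx⟩ := hp.exists_ne_zero
  set V := (periods p : Set G)
  have eq_indicator (z : G) : p z = V.indicator (fun _ => p x) (z - x) := by
    by_cases hz : z - x ∈ V
    · rw [Set.indicator_of_mem hz, ← hz x, add_sub_cancel]
    · rw [Set.indicator_of_notMem hz]
      exact not_not.1 fun hpz => hz (sub_mem_periods hp h hpz hx)
  have mass : Nat.card V * p x = 1 := by
    rw [← sum_indicator_const, ← (isDist_iff.1 hp).2,
      Finset.sum_congr rfl fun z _ => eq_indicator z]
    exact ((Equiv.subRight x).sum_comp _).symm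
  refine ⟨periods p, x, funext fun z => ?_⟩
  rw [eq_indicator, unifOn, eq_inv_of_mul_eq_one_right mass]

end Uniform

section Tau

variable {G : Type*} [AddCommGroup G] [Finite G]

/-- The functional `τ` of Gowers, Green, Manners and Tao: `d[X; Y]` plus `η` times a penalty for
moving away from the reference laws `p₀` and `q₀`. -/
def tau (p₀ q₀ : G → ℝ) (η : ℝ) (p q : G → ℝ) : ℝ :=
  dRuzsa p q + η * (dRuzsa p₀ p + dRuzsa q₀ q)

/-- A pair of laws minimising `tau p₀ q₀ η` among all pairs of laws. -/
structure IsTauMinimizer (p₀ q₀ : G → ℝ) (η : ℝ) (p q : G → ℝ) : Prop where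
  isDist_left : IsDist p
  isDist_right : IsDist q
  tau_le : ∀ p' q', IsDist p' → IsDist q' → tau p₀ q₀ η p q ≤ tau p₀ q₀ η p' q'

lemma continuous_ent {X A : Type*} [TopologicalSpace X] [Finite A] {f : X → A → ℝ}
    (hf : Continuous f) : Continuous fun x => ent (f x) := by
  cases nonempty_fintype A
  simp only [ent_eq_sum]
  exact continuous_finsetSum _ fun a _ => continuous_negMulLog.comp (by fun_prop)

lemma continuous_dRuzsa {X : Type*} [TopologicalSpace X] {f g : X → G → ℝ} (hf : Continuous f)
    (hg : Continuous g) : Continuous fun x => dRuzsa (f x) (g x) := by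
  cases nonempty_fintype G
  have hconv : Continuous fun x => conv (f x) (g x) := by
    refine continuous_pi fun z => ?_
    simp only [conv_apply]
    fun_prop
  exact ((continuous_ent hconv).sub ((continuous_ent hf).div_const 2)).sub
    ((continuous_ent hg).div_const 2)

theorem exists_isTauMinimizer (p₀ q₀ : G → ℝ) (η : ℝ) : ∃ p q, IsTauMinimizer p₀ q₀ η p q := by
  cases nonempty_fintype G
  have mem_iff (p : G → ℝ) : p ∈ stdSimplex ℝ G ↔ IsDist p := isDist_iff.symm
  have hcont : Continuous fun z : (G → ℝ) × (G → ℝ) => tau p₀ q₀ η z.1 z.2 :=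
    (continuous_dRuzsa continuous_fst continuous_snd).add <| continuous_const.mul <|
      (continuous_dRuzsa continuous_const continuous_fst).add
        (continuous_dRuzsa continuous_const continuous_snd)
  have hunif : IsDist (unifOn (Set.univ : Set G)) := isDist_unifOn Set.univ_nonempty
  obtain ⟨⟨p, q⟩, ⟨hp, hq⟩, hmin⟩ :=
    ((isCompact_stdSimplex ℝ G).prod (isCompact_stdSimplex ℝ G)).exists_isMinOn
      ⟨(_, _), (mem_iff _).2 hunif, (mem_iff _).2 hunif⟩ hcont.continuousOn
  exact ⟨p, q, (mem_iff p).1 hp, (mem_iff q).1 hq, fun p' q' hp' hq' =>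
    hmin (show (p', q') ∈ _ from ⟨(mem_iff p').2 hp', (mem_iff q').2 hq'⟩)⟩

end Tau

section CondRuzsa

variable {A C G : Type*}

lemma fiber_nonneg {r : A × C → ℝ} (hr : ∀ t, 0 ≤ r t) (c : C) (a : A) : 0 ≤ fiber r c a :=
  div_nonneg (hr _) (push_nonneg hr _ _)

variable [Finite A] [Finite C] [AddCommGroup G] [Finite G]

lemma push_snd_mul_fiber {r : A × C → ℝ} (hr : ∀ t, 0 ≤ r t) (a : A) (c : C) :
    push Prod.snd r c * fiber r c a = r (a, c) :=
  mul_div_cancel_of_imp' (apply_eq_zero_of_push_snd_eq_zero hr)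

lemma isDist_fiber {r : A × C → ℝ} (hr : ∀ t, 0 ≤ r t) {c : C} (hc : push Prod.snd r c ≠ 0) :
    IsDist (fiber r c) := by
  cases nonempty_fintype A
  rw [isDist_iff]
  refine ⟨fiber_nonneg hr c, ?_⟩
  simp only [fiber, ← Finset.sum_div, ← push_snd_apply]
  exact div_self hc

/-- The conditional Ruzsa distance `d[X; Y | Z]`, where `X` has law `p` and `(Y, Z)` has joint
law `r`; conditioning is only needed on one side. -/
def condRuzsa (p : G → ℝ) (r : G × C → ℝ) : ℝ :=
  ∑ᶠ c, push Prod.snd r c * dRuzsa p (fiber r c)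

lemma condRuzsa_le {p : G → ℝ} {r : G × C → ℝ} (hp : IsDist p) (hr : IsDist r) :
    condRuzsa p r ≤ dRuzsa p (push Prod.fst r) + (ent (push Prod.fst r) - condEnt r) / 2 := by
  cases nonempty_fintype G
  cases nonempty_fintype C
  have hm := isDist_iff.1 (hr.push Prod.snd)
  rw [isDist_iff] at hp hr
  have mixture : (fun z => ∑ c, push Prod.snd r c * conv p (fiber r c) z) =
      conv p (push Prod.fst r) := by
    ext z
    simp only [conv_apply, Finset.mul_sum, push_fst_apply]
    rw [Finset.sum_comm]
    simp only [mul_left_comm, push_snd_mul_fiber hr.1]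
  have jensen := sum_mul_ent_le hm.1 hm.2 (p := fun c => conv p (fiber r c)) fun c z => by
    rw [conv_apply]
    exact Finset.sum_nonneg fun x _ => mul_nonneg (hp.1 x) (fiber_nonneg hr.1 c _)
  rw [mixture] at jensen
  simp only [condRuzsa, condEnt, finsum_eq_sum_of_fintype, dRuzsa, mul_sub, mul_div_assoc',
    Finset.sum_sub_distrib, ← Finset.sum_div, ← Finset.sum_mul, hm.2]
  linarith

lemma push_snd_push_add_condProd {f g : G × C → ℝ} (hf : ∀ t, 0 ≤ f t)
    (hfg : push Prod.snd f = push Prod.snd g) :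
    push Prod.snd (push (fun t => (t.1 + t.2.1, t.2.2)) (condProd f g)) = push Prod.snd f := by
  rw [push_push, ← push_fst_thd_condProd hf hfg, push_push, push_fst_thd_condProd hf hfg]

lemma fiber_push_add_condProd {f g : G × C → ℝ} (hf : ∀ t, 0 ≤ f t)
    (hfg : push Prod.snd f = push Prod.snd g) (c : C) :
    fiber (push (fun t => (t.1 + t.2.1, t.2.2)) (condProd f g)) c =
      conv (fiber f c) (fiber g c) := by
  classical
  cases nonempty_fintype G
  cases nonempty_fintype C
  ext z
  have sum_law : push (fun t => (t.1 + t.2.1, t.2.2)) (condProd f g) (z, c) =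
      ∑ x, f (x, c) * g (z - x, c) / push Prod.snd f c := by
    simp only [push_apply (fun t : G × G × C => (t.1 + t.2.1, t.2.2)), Fintype.sum_prod_type,
      Prod.mk.injEq, ite_and, Finset.sum_ite_irrel, Finset.sum_ite_eq', Finset.sum_const_zero,
      Finset.mem_univ, if_true, ← eq_sub_iff_add_eq', condProd]
  rw [fiber, push_snd_push_add_condProd hf hfg, sum_law, conv_apply, Finset.sum_div]
  simp only [fiber, ← hfg, div_mul_div_comm, div_div]

end CondRuzsa

section Minimizer

variable {G : Type*} [AddCommGroup G] [Finite G] {C : Type*} [Finite C]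
  {p₀ q₀ p q : G → ℝ} {η : ℝ}

/-- Minimality applied to each pair of fibers and averaged over the conditioning variable. -/
lemma IsTauMinimizer.tau_le_condProd (hmin : IsTauMinimizer p₀ q₀ η p q) {f g : G × C → ℝ}
    (hf : IsDist f) (hg : IsDist g) (hfg : push Prod.snd f = push Prod.snd g) :
    tau p₀ q₀ η p q ≤ condEnt (push (fun t => (t.1 + t.2.1, t.2.2)) (condProd f g)) -
      condEnt f / 2 - condEnt g / 2 + η * (condRuzsa p₀ f + condRuzsa q₀ g) := by
  cases nonempty_fintype C
  have hm := isDist_iff.1 (hf.push Prod.snd)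
  have fiberwise (c : C) : push Prod.snd f c * tau p₀ q₀ η p q ≤
      push Prod.snd f c * tau p₀ q₀ η (fiber f c) (fiber g c) := by
    rcases eq_or_ne (push Prod.snd f c) 0 with hc | hc
    · rw [hc, zero_mul, zero_mul]
    · exact mul_le_mul_of_nonneg_left (hmin.tau_le _ _ (isDist_fiber hf.1 hc)
        (isDist_fiber hg.1 (hfg ▸ hc))) (hm.1 c)
  have average := Finset.sum_le_sum fun c (_ : c ∈ Finset.univ) => fiberwise c
  rw [← Finset.sum_mul, hm.2, one_mul] at average
  refine average.trans_eq ?_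
  simp only [condEnt, condRuzsa, finsum_eq_sum_of_fintype, push_snd_push_add_condProd hf.1 hfg,
    fiber_push_add_condProd hf.1 hfg, ← hfg, Finset.sum_div, Finset.mul_sum,
    ← Finset.sum_add_distrib, ← Finset.sum_sub_distrib]
  exact Finset.sum_congr rfl fun c _ => by rw [tau, dRuzsa]; ring

end Minimizer

section BalogSzemerediGowers

lemma exists_of_push_ne_zero {Ω A : Type*} {w : Ω → ℝ} {X : Ω → A} {a : A} (h : push X w a ≠ 0) :
    ∃ ω, X ω = a ∧ w ω ≠ 0 := by
  contrapose! h
  exact finsum_mem_eq_zero_of_forall_eq_zero h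

variable {Ω C G : Type*} [Finite Ω] [Finite C] [AddCommGroup G] [Finite G]

lemma ent_sub_add_le {w : Ω → ℝ} (hw : ∀ ω, 0 ≤ w ω) {X₁ Y₁ X₂ Y₂ : Ω → G} (S : Ω → C)
    (hadd : ∀ ω, w ω ≠ 0 → X₁ ω + Y₁ ω = X₂ ω + Y₂ ω) :
    H[fun ω => (X₁ ω - Y₂ ω, X₁ ω + Y₁ ω, S ω); w] +
        H[fun ω => (X₁ ω, Y₁ ω, X₁ ω - Y₂ ω, S ω); w] + 3 * H[S; w] ≤
      H[fun ω => (X₁ ω + Y₁ ω, S ω); w] + H[fun ω => (X₁ ω, S ω); w] +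
        H[fun ω => (Y₁ ω, S ω); w] + H[fun ω => (X₂ ω, S ω); w] + H[fun ω => (Y₂ ω, S ω); w] := by
  have cross : H[fun ω => (X₁ ω, X₁ ω - Y₂ ω, S ω); w] = H[fun ω => (X₁ ω, Y₂ ω, S ω); w] :=
    ent_push_congr fun _ _ _ _ => by simp only [Prod.mk.injEq]; grind
  have cross' : H[fun ω => (Y₁ ω, X₁ ω - Y₂ ω, S ω); w] = H[fun ω => (X₂ ω, Y₁ ω, S ω); w] :=
    ent_push_congr fun ω ω' hω hω' => by
      simp only [Prod.mk.injEq, sub_eq_sub_iff_add_eq_add.2 (hadd ω hω),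
        sub_eq_sub_iff_add_eq_add.2 (hadd ω' hω')]
      grind
  have h₁ := ent_push_submodular hw (fun ω => X₁ ω - Y₂ ω) (fun ω => X₁ ω + Y₁ ω) S
  have h₂ := ent_push_submodular hw X₁ Y₁ fun ω => (X₁ ω - Y₂ ω, S ω)
  have h₃ := ent_push_submodular hw X₁ Y₂ S
  have h₄ := ent_push_submodular hw X₂ Y₁ S
  linarith

lemma ent_push_left_condProd {A B D : Type*} [Finite A] [Finite B] [Finite D] {f : A × C → ℝ}
    {g : B × C → ℝ} (hf : ∀ t, 0 ≤ f t) (hfg : push Prod.snd f = push Prod.snd g)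
    (φ : A × C → D) : H[fun t => φ (t.1, t.2.2); condProd f g] = H[φ; f] := by
  rw [← push_push φ, push_fst_thd_condProd hf hfg]

lemma ent_push_right_condProd {A B D : Type*} [Finite A] [Finite B] [Finite D] {f : A × C → ℝ}
    {g : B × C → ℝ} (hg : ∀ t, 0 ≤ g t) (hfg : push Prod.snd f = push Prod.snd g)
    (φ : B × C → D) : H[fun t => φ t.2; condProd f g] = H[φ; g] := by
  rw [← push_push φ, push_snd_condProd hg hfg]

lemma ent_sub_condProd_le {r : (G × G) × G × C → ℝ} (hr : ∀ t, 0 ≤ r t)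
    (hadd : ∀ t, r t ≠ 0 → t.1.1 + t.1.2 = t.2.1) :
    H[fun t => (t.1.1 - t.2.1.2, t.2.2); condProd r r] ≤
      2 * (H[fun t => (t.1.1, t.2.2); r] + H[fun t => (t.1.2, t.2.2); r] + H[Prod.snd; r]) -
        2 * ent r - 3 * H[fun t => t.2.2; r] := by
  have add_left (t) (ht : condProd r r t ≠ 0) : t.1.1 + t.1.2 = t.2.2.1 :=
    hadd (t.1, t.2.2) (left_ne_zero_of_mul (div_ne_zero_iff.1 ht).1)
  have add_right (t) (ht : condProd r r t ≠ 0) : t.2.1.1 + t.2.1.2 = t.2.2.1 :=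
    hadd t.2 (right_ne_zero_of_mul (div_ne_zero_iff.1 ht).1)
  have key := ent_sub_add_le (condProd_nonneg hr hr) (fun t => t.2.2.2) fun t ht =>
    (add_left t ht).trans (add_right t ht).symm
  have sum_eq : H[fun t => (t.1.1 - t.2.1.2, t.1.1 + t.1.2, t.2.2.2); condProd r r] =
      H[fun t => (t.1.1 - t.2.1.2, t.2.2); condProd r r] :=
    ent_push_congr fun t t' ht ht' => by rw [add_left t ht, add_left t' ht']
  have joint : H[fun t => (t.1.1, t.1.2, t.1.1 - t.2.1.2, t.2.2.2); condProd r r] =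
      2 * ent r - H[Prod.snd; r] := by
    rw [two_mul, ← ent_condProd hr hr rfl, ← push_id (condProd r r), push_push]
    refine ent_push_congr fun t t' ht ht' => ?_
    have := add_left t ht
    have := add_left t' ht'
    have := add_right t ht
    have := add_right t' ht'
    simp only [Prod.ext_iff]
    grind
  have v_eq : H[fun t => (t.1.1 + t.1.2, t.2.2.2); condProd r r] = H[Prod.snd; r] := by
    rw [← ent_push_right_condProd hr rfl]
    exact ent_push_congr fun t t' ht ht' => by rw [add_left t ht, add_left t' ht']
  rw [sum_eq, joint, v_eq, ent_push_right_condProd hr rfl fun t => t.2.2,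
    ent_push_left_condProd hr rfl fun t => (t.1.1, t.2.2),
    ent_push_left_condProd hr rfl fun t => (t.1.2, t.2.2),
    ent_push_right_condProd hr rfl fun t => (t.1.1, t.2.2),
    ent_push_right_condProd hr rfl fun t => (t.1.2, t.2.2)] at key
  linarith

/-- The entropic Balog–Szemerédi–Gowers step: two copies of `(X, Y)`, conditionally independent
given `(X + Y, S)`, are fed into the minimality of `(p, q)`. -/
lemma IsTauMinimizer.tau_le_bsg [Module (ZMod 2) G] {p₀ q₀ p q : G → ℝ} {η : ℝ}
    (hmin : IsTauMinimizer p₀ q₀ η p q) {w : Ω → ℝ} (hw : IsDist w) (X Y : Ω → G) (S : Ω → C) :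
    tau p₀ q₀ η p q ≤
      2 * (H[fun ω => (X ω, S ω); w] + H[fun ω => (Y ω, S ω); w] +
        H[fun ω => (X ω + Y ω, S ω); w]) -
      3 * (H[fun ω => (X ω, Y ω, S ω); w] + H[S; w]) +
      η * (condRuzsa p₀ (push (fun ω => (X ω, X ω + Y ω, S ω)) w) +
        condRuzsa q₀ (push (fun ω => (Y ω, X ω + Y ω, S ω)) w)) := by
  set Z : Ω → G × C := fun ω => (X ω + Y ω, S ω)
  set r := push (fun ω => ((X ω, Y ω), Z ω)) w with hr
  have hadd (t) (ht : r t ≠ 0) : t.1.1 + t.1.2 = t.2.1 := by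
    obtain ⟨ω, rfl, -⟩ := exists_of_push_ne_zero ht
    rfl
  have r_nonneg : ∀ t, 0 ≤ r t := (hw.push _).1
  have sum_law : push (fun t => (t.1 + t.2.1, t.2.2))
      (condProd (push (fun ω => (X ω, Z ω)) w) (push (fun ω => (Y ω, Z ω)) w)) =
      push (fun t => (t.1.1 - t.2.1.2, t.2.2)) (condProd r r) := by
    have hX : push (fun t => (t.1.1, t.2)) r = push (fun ω => (X ω, Z ω)) w := push_push _ _ _
    have hY : push (fun t => (t.1.2, t.2)) r = push (fun ω => (Y ω, Z ω)) w := push_push _ _ _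
    rw [← hX, ← hY, ← push_prodMap_condProd, push_push]
    simp only [ZModModule.sub_eq_add]
  have hZ : H[fun t => t.2.2; condProd r r] = H[Z; w] := by
    rw [ent_push_right_condProd r_nonneg rfl, hr, push_push]
  have joint : ent r = H[fun ω => (X ω, Y ω, S ω); w] :=
    ent_push_congr fun _ _ _ _ => by simp only [Prod.mk.injEq, Z]; grind
  have joint_left : H[fun ω => (X ω, Z ω); w] = H[fun ω => (X ω, Y ω, S ω); w] :=
    ent_push_congr fun _ _ _ _ => by simp only [Prod.mk.injEq, Z]; grind
  have joint_right : H[fun ω => (Y ω, Z ω); w] = H[fun ω => (X ω, Y ω, S ω); w] :=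
    ent_push_congr fun _ _ _ _ => by simp only [Prod.mk.injEq, Z]; grind
  have same_cond : push Prod.snd (push (fun ω => (X ω, Z ω)) w) =
    push Prod.snd (push (fun ω => (Y ω, Z ω)) w) := by rw [push_push, push_push]
  have minimality := hmin.tau_le_condProd (hw.push _) (hw.push _) same_cond
  rw [sum_law, condEnt_eq (push_nonneg (condProd_nonneg r_nonneg r_nonneg) _),
    condEnt_eq (push_nonneg hw.1 _), condEnt_eq (push_nonneg hw.1 _), push_push, push_push,
    push_push, joint_left, joint_right] at minimality
  have bsg := ent_sub_condProd_le r_nonneg hadd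
  rw [joint, hr, push_push, push_push, push_push, push_push, ← hr] at bsg
  linarith

end BalogSzemerediGowers

section IndependentQuadruple

variable {Ω G : Type*} [Finite Ω] [Finite G]

/-- On the finite probability space `(Ω, w)`, the random variables `X₁, X₂, X₃, X₄` are
independent with laws `p₁, p₂, p₃, p₄`; they are grouped in two pairs because the fibring argument
conditions on `X₁ + X₂` and `X₃ + X₄`. -/
structure IsIndepQuad (w : Ω → ℝ) (X₁ X₂ X₃ X₄ : Ω → G) (p₁ p₂ p₃ p₄ : G → ℝ) : Prop where
  isDist : IsDist w
  isDist₁ : IsDist p₁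
  isDist₂ : IsDist p₂
  isDist₃ : IsDist p₃
  isDist₄ : IsDist p₄
  push_eq : push (fun ω => ((X₁ ω, X₂ ω), X₃ ω, X₄ ω)) w =
    prodDist (prodDist p₁ p₂) (prodDist p₃ p₄)

namespace IsIndepQuad

variable {w : Ω → ℝ} {X₁ X₂ X₃ X₄ : Ω → G} {p₁ p₂ p₃ p₄ : G → ℝ}

lemma swap_middle (h : IsIndepQuad w X₁ X₂ X₃ X₄ p₁ p₂ p₃ p₄) :
    IsIndepQuad w X₁ X₃ X₂ X₄ p₁ p₃ p₂ p₄ where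
  isDist := h.isDist
  isDist₁ := h.isDist₁
  isDist₂ := h.isDist₃
  isDist₃ := h.isDist₂
  isDist₄ := h.isDist₄
  push_eq := by
    have hperm := push_equiv (Equiv.prodProdProdComm G G G G)
      (prodDist (prodDist p₁ p₂) (prodDist p₃ p₄))
    rw [← h.push_eq, push_push, h.push_eq] at hperm
    exact hperm.trans (funext fun t => mul_mul_mul_comm _ _ _ _)

lemma swap_right (h : IsIndepQuad w X₁ X₂ X₃ X₄ p₁ p₂ p₃ p₄) :
    IsIndepQuad w X₁ X₂ X₄ X₃ p₁ p₂ p₄ p₃ where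
  isDist := h.isDist
  isDist₁ := h.isDist₁
  isDist₂ := h.isDist₂
  isDist₃ := h.isDist₄
  isDist₄ := h.isDist₃
  push_eq := by
    have hperm := push_prodMap_prodDist id Prod.swap (prodDist p₁ p₂) (prodDist p₃ p₄)
    rw [← h.push_eq, push_push, push_id, push_swap_prodDist] at hperm
    exact hperm

lemma swap_pairs (h : IsIndepQuad w X₁ X₂ X₃ X₄ p₁ p₂ p₃ p₄) :
    IsIndepQuad w X₃ X₄ X₁ X₂ p₃ p₄ p₁ p₂ where
  isDist := h.isDist
  isDist₁ := h.isDist₃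
  isDist₂ := h.isDist₄
  isDist₃ := h.isDist₁
  isDist₄ := h.isDist₂
  push_eq := by rw [← push_swap_prodDist, ← h.push_eq, push_push]; rfl

lemma push_prodMap {A B : Type*} [Finite A] [Finite B]
    (h : IsIndepQuad w X₁ X₂ X₃ X₄ p₁ p₂ p₃ p₄) (f : G × G → A) (g : G × G → B) :
    push (fun ω => (f (X₁ ω, X₂ ω), g (X₃ ω, X₄ ω))) w =
      prodDist (push f (prodDist p₁ p₂)) (push g (prodDist p₃ p₄)) := by
  rw [← push_prodMap_prodDist, ← h.push_eq, push_push]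

lemma push_first (h : IsIndepQuad w X₁ X₂ X₃ X₄ p₁ p₂ p₃ p₄) : push X₁ w = p₁ := by
  rw [← push_fst_prodDist p₁ h.isDist₂,
    ← push_fst_prodDist (prodDist p₁ p₂) (h.isDist₃.prodDist h.isDist₄), ← h.push_eq, push_push,
    push_push]

variable [AddCommGroup G]

lemma push_add_pair (h : IsIndepQuad w X₁ X₂ X₃ X₄ p₁ p₂ p₃ p₄) :
    push (fun ω => (X₁ ω + X₂ ω, X₃ ω + X₄ ω)) w = prodDist (conv p₁ p₂) (conv p₃ p₄) := by
  rw [← push_add_prodDist, ← push_add_prodDist, ← h.push_prodMap]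

lemma ent_add_pair (h : IsIndepQuad w X₁ X₂ X₃ X₄ p₁ p₂ p₃ p₄) :
    H[fun ω => (X₁ ω + X₂ ω, X₃ ω + X₄ ω); w] = ent (conv p₁ p₂) + ent (conv p₃ p₄) := by
  rw [h.push_add_pair, ent_prodDist (h.isDist₁.conv h.isDist₂) (h.isDist₃.conv h.isDist₄)]

lemma ent_add_total (h : IsIndepQuad w X₁ X₂ X₃ X₄ p₁ p₂ p₃ p₄) {S : Ω → G}
    (hS : ∀ ω, X₁ ω + X₂ ω + (X₃ ω + X₄ ω) = S ω) :
    H[fun ω => (X₁ ω + X₂ ω, S ω); w] = ent (conv p₁ p₂) + ent (conv p₃ p₄) := by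
  rw [← h.ent_add_pair]
  exact ent_push_congr fun _ _ _ _ => by
    simp only [Prod.mk.injEq, ← hS, and_congr_right_iff]
    exact fun h => by rw [h, add_right_inj]

lemma push_add_left (h : IsIndepQuad w X₁ X₂ X₃ X₄ p₁ p₂ p₃ p₄) :
    push (fun ω => X₁ ω + X₂ ω) w = conv p₁ p₂ := by
  rw [← push_fst_prodDist (conv p₁ p₂) (h.isDist₃.conv h.isDist₄), ← h.push_add_pair, push_push]

lemma push_add_add (h : IsIndepQuad w X₁ X₂ X₃ X₄ p₁ p₂ p₃ p₄) :
    push (fun ω => X₁ ω + X₂ ω + (X₃ ω + X₄ ω)) w = conv (conv p₁ p₂) (conv p₃ p₄) := by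
  rw [← push_add_prodDist (conv p₁ p₂), ← h.push_add_pair, push_push]

lemma ent_first_add_pair (h : IsIndepQuad w X₁ X₂ X₃ X₄ p₁ p₂ p₃ p₄) :
    H[fun ω => (X₁ ω, X₁ ω + X₂ ω, X₃ ω + X₄ ω); w] =
      ent p₁ + ent p₂ + ent (conv p₃ p₄) := by
  rw [← ent_prodDist h.isDist₁ h.isDist₂, ← push_add_prodDist p₃,
    ← ent_prodDist (h.isDist₁.prodDist h.isDist₂) ((h.isDist₃.prodDist h.isDist₄).push _),
    ← push_id (prodDist p₁ p₂), ← h.push_prodMap]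
  exact ent_push_congr fun _ _ _ _ => by simp only [Prod.mk.injEq, id]; grind

end IsIndepQuad

lemma exists_isIndepQuad {p₁ p₂ p₃ p₄ : G → ℝ} (h₁ : IsDist p₁) (h₂ : IsDist p₂) (h₃ : IsDist p₃)
    (h₄ : IsDist p₄) :
    ∃ (w : (G × G) × G × G → ℝ) (X₁ X₂ X₃ X₄ : (G × G) × G × G → G),
      IsIndepQuad w X₁ X₂ X₃ X₄ p₁ p₂ p₃ p₄ :=
  ⟨_, fun z => z.1.1, fun z => z.1.2, fun z => z.2.1, fun z => z.2.2,
    (h₁.prodDist h₂).prodDist (h₃.prodDist h₄), h₁, h₂, h₃, h₄, push_id _⟩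

end IndependentQuadruple

section Fibring

variable {Ω G : Type*} [Finite Ω] [AddCommGroup G] [Finite G] {p₀ q₀ p q : G → ℝ} {η : ℝ}

lemma IsTauMinimizer.dRuzsa_le_conv (hmin : IsTauMinimizer p₀ q₀ η p q) (hη : 0 ≤ η)
    (hp₀ : IsDist p₀) (hq₀ : IsDist q₀) {r s : G → ℝ} (hr : IsDist r) (hs : IsDist s) :
    dRuzsa p q ≤ ent (conv (conv p r) (conv q s)) - (ent (conv p r) + ent (conv q s)) / 2 +
      η / 2 * (ent (conv p r) - ent p + (ent (conv q s) - ent q)) := by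
  have hp := hmin.isDist_left
  have hq := hmin.isDist_right
  have minimality := hmin.tau_le _ _ (hp.conv hr) (hq.conv hs)
  have penalty := mul_le_mul_of_nonneg_left
    (add_le_add (dRuzsa_conv_le hp₀ hp hr) (dRuzsa_conv_le hq₀ hq hs)) hη
  rw [tau, tau, dRuzsa.eq_def (conv p r)] at minimality
  linarith

lemma condRuzsa_conv_le {C : Type*} [Finite C] {r s : G → ℝ} {f : G × C → ℝ} (hp₀ : IsDist p₀)
    (hr : IsDist r) (hs : IsDist s) (hf : IsDist f) (hfst : push Prod.fst f = conv r s) :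
    condRuzsa p₀ f ≤ dRuzsa p₀ r + ent (conv r s) - (ent r + condEnt f) / 2 := by
  have h := condRuzsa_le hp₀ hf
  rw [hfst] at h
  linarith [dRuzsa_conv_le hp₀ hr hs]

/-- Fibring: minimality is applied to `X₁` and `X₃`, which are independent conditionally on the
pair `(X₁ + X₂, X₃ + X₄)`. -/
lemma IsTauMinimizer.dRuzsa_le_fibring (hmin : IsTauMinimizer p₀ q₀ η p q) (hη : 0 ≤ η)
    (hp₀ : IsDist p₀) (hq₀ : IsDist q₀) {w : Ω → ℝ} {X₁ X₂ X₃ X₄ : Ω → G} {r s : G → ℝ}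
    (h : IsIndepQuad w X₁ X₂ X₃ X₄ p r q s) :
    dRuzsa p q ≤ H[fun ω => (X₁ ω + X₃ ω, X₁ ω + X₂ ω, X₃ ω + X₄ ω); w] -
      (ent (conv p r) + ent (conv q s)) / 2 - (ent p + ent r + ent q + ent s) / 2 +
      η / 2 * (ent (conv p r) - ent r + (ent (conv q s) - ent s)) := by
  have hw := h.isDist
  set T : Ω → G × G := fun ω => (X₁ ω + X₂ ω, X₃ ω + X₄ ω)
  have law : push (fun ω => ((X₁ ω, X₁ ω + X₂ ω), (X₃ ω, X₃ ω + X₄ ω))) w =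
      prodDist (jointSum p r) (jointSum q s) :=
    h.push_prodMap (fun z => (z.1, z.1 + z.2)) fun z => (z.1, z.1 + z.2)
  have split := condProd_prodDist (C := G) (D := G) (P := jointSum p r) (Q := jointSum q s)
    ((h.isDist₁.prodDist h.isDist₂).push _).1 ((h.isDist₃.prodDist h.isDist₄).push _).1
  rw [← law, push_push, push_push, push_push] at split
  have condEnt_left : condEnt (push (fun ω => (X₁ ω, T ω)) w) =
      ent p + ent r - ent (conv p r) := by
    rw [condEnt_eq (push_nonneg hw.1 _), h.ent_first_add_pair, push_push, h.ent_add_pair]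
    ring
  have condEnt_right : condEnt (push (fun ω => (X₃ ω, T ω)) w) =
      ent q + ent s - ent (conv q s) := by
    have reorder : H[fun ω => (X₃ ω, T ω); w] =
        H[fun ω => (X₃ ω, X₃ ω + X₄ ω, X₁ ω + X₂ ω); w] :=
      ent_push_congr fun _ _ _ _ => by simp only [Prod.mk.injEq, T]; grind
    rw [condEnt_eq (push_nonneg hw.1 _), reorder, h.swap_pairs.ent_first_add_pair, push_push,
      h.ent_add_pair]
    ring
  have minimality := hmin.tau_le_condProd (hw.push fun ω => (X₁ ω, T ω))
    (hw.push fun ω => (X₃ ω, T ω)) (by rw [push_push, push_push])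
  rw [← split, condEnt_left, condEnt_right, push_push,
    condEnt_eq (push_nonneg hw.1 _), push_push, h.ent_add_pair] at minimality
  have penalty_left := condRuzsa_le hp₀ (hw.push fun ω => (X₁ ω, T ω))
  have penalty_right := condRuzsa_le hq₀ (hw.push fun ω => (X₃ ω, T ω))
  rw [push_push, h.push_first, condEnt_left] at penalty_left
  rw [push_push, h.swap_pairs.push_first, condEnt_right] at penalty_right
  have penalty := mul_le_mul_of_nonneg_left (add_le_add penalty_left penalty_right) hη
  rw [tau] at minimality
  linarith

end Fibring

section LinearChange

variable {Ω G : Type*} [Finite Ω] [AddCommGroup G] [Finite G] (w : Ω → ℝ) (X Y S : Ω → G)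

lemma ent_add_left_triple :
    H[fun ω => (X ω + Y ω, X ω, S ω); w] = H[fun ω => (X ω, Y ω, S ω); w] :=
  ent_push_congr fun _ _ _ _ => by simp only [Prod.mk.injEq]; grind

lemma ent_sub_add_triple :
    H[fun ω => (Y ω, S ω - (X ω + Y ω), S ω); w] = H[fun ω => (X ω, Y ω, S ω); w] :=
  ent_push_congr fun _ _ _ _ => by simp only [Prod.mk.injEq]; grind

lemma ent_add_sub_add_triple :
    H[fun ω => (X ω, X ω + Y ω, S ω - (X ω + Y ω)); w] = H[fun ω => (X ω, Y ω, S ω); w] :=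
  ent_push_congr fun _ _ _ _ => by simp only [Prod.mk.injEq]; grind

end LinearChange

section Endgame

variable {Ω C G : Type*} [Finite Ω] [Finite C] [AddCommGroup G] [Finite G]
  {p₀ q₀ p q : G → ℝ} {η : ℝ} {w : Ω → ℝ} {a b c d : Ω → G}

lemma IsTauMinimizer.dRuzsa_le_fibring_cross (hmin : IsTauMinimizer p₀ q₀ η p q) (hη : 0 ≤ η)
    (hp₀ : IsDist p₀) (hq₀ : IsDist q₀) (h : IsIndepQuad w a b c d p q p q) :
    dRuzsa p q ≤ H[fun ω => (a ω + b ω, b ω + c ω, a ω + b ω + (c ω + d ω)); w] -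
      ent (conv p q) - (ent p + ent q) + η * dRuzsa p q := by
  have fibring := hmin.dRuzsa_le_fibring hη hp₀ hq₀ h.swap_right.swap_middle
  have joint : H[fun ω => (a ω + b ω, a ω + d ω, b ω + c ω); w] =
      H[fun ω => (a ω + b ω, b ω + c ω, a ω + b ω + (c ω + d ω)); w] :=
    ent_push_congr fun _ _ _ _ => by simp only [Prod.mk.injEq]; grind
  rw [joint, conv_comm q p] at fibring
  nlinarith [dRuzsa.eq_def p q]

variable [Module (ZMod 2) G]

lemma IsTauMinimizer.dRuzsa_le_bsg (hmin : IsTauMinimizer p₀ q₀ η p q) (hη : 0 ≤ η)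
    (hp₀ : IsDist p₀) (hq₀ : IsDist q₀) (hw : IsDist w) {X Y : Ω → G} (S : Ω → C) {r s : G → ℝ}
    (hr : IsDist r) (hs : IsDist s) (hX : push X w = conv p r) (hY : push Y w = conv q s) :
    dRuzsa p q ≤
      2 * (H[fun ω => (X ω, S ω); w] + H[fun ω => (Y ω, S ω); w] +
        H[fun ω => (X ω + Y ω, S ω); w]) -
      3 * (H[fun ω => (X ω, Y ω, S ω); w] + H[S; w]) +
      η * (ent (conv p r) + ent (conv q s) - (ent p + ent q) / 2 -
        (H[fun ω => (X ω, Y ω, S ω); w] - H[fun ω => (X ω + Y ω, S ω); w])) := by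
  have condEnt_left : condEnt (push (fun ω => (X ω, X ω + Y ω, S ω)) w) =
      H[fun ω => (X ω, Y ω, S ω); w] - H[fun ω => (X ω + Y ω, S ω); w] := by
    rw [condEnt_eq (push_nonneg hw.1 _), push_push]
    exact congrArg (· - _) (ent_push_congr fun _ _ _ _ => by simp only [Prod.mk.injEq]; grind)
  have condEnt_right : condEnt (push (fun ω => (Y ω, X ω + Y ω, S ω)) w) =
      H[fun ω => (X ω, Y ω, S ω); w] - H[fun ω => (X ω + Y ω, S ω); w] := by
    rw [condEnt_eq (push_nonneg hw.1 _), push_push]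
    exact congrArg (· - _) (ent_push_congr fun _ _ _ _ => by simp only [Prod.mk.injEq]; grind)
  have penalty_left := condRuzsa_conv_le hp₀ hmin.isDist_left hr
    (hw.push fun ω => (X ω, X ω + Y ω, S ω)) (by rw [push_push, hX])
  have penalty_right := condRuzsa_conv_le hq₀ hmin.isDist_right hs
    (hw.push fun ω => (Y ω, X ω + Y ω, S ω)) (by rw [push_push, hY])
  rw [condEnt_left] at penalty_left
  rw [condEnt_right] at penalty_right
  have penalty := mul_le_mul_of_nonneg_left (add_le_add penalty_left penalty_right) hη
  have minimality := hmin.tau_le_bsg hw X Y S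
  rw [tau] at minimality
  linarith

/-- Balog–Szemerédi–Gowers applied to each two of `a + b`, `b + c` and `a + c`, which sum to
zero; in the second application `b + d` stands for `a + c`, from which it differs by the total. -/
lemma IsTauMinimizer.three_mul_dRuzsa_le (hmin : IsTauMinimizer p₀ q₀ η p q) (hη : 0 ≤ η)
    (hp₀ : IsDist p₀) (hq₀ : IsDist q₀) (h : IsIndepQuad w a b c d p q p q) :
    3 * dRuzsa p q ≤ 24 * ent (conv p q) + 6 * (ent (conv p p) + ent (conv q q)) -
      9 * (H[fun ω => (a ω + b ω, b ω + c ω, a ω + b ω + (c ω + d ω)); w] +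
        ent (conv (conv p q) (conv p q))) +
      η * (8 * ent (conv p q) + 2 * (ent (conv p p) + ent (conv q q)) - 3 / 2 * (ent p + ent q) -
        3 * H[fun ω => (a ω + b ω, b ω + c ω, a ω + b ω + (c ω + d ω)); w]) := by
  have hp := h.isDist₁
  have hq := h.isDist₂
  have h' : IsIndepQuad w a d b c p q q p := h.swap_right.swap_middle
  set S : Ω → G := fun ω => a ω + b ω + (c ω + d ω)
  have ent_ab := h.ent_add_total (S := S) fun _ => rfl
  have ent_cd := h.swap_pairs.ent_add_total (S := S) fun _ => add_comm _ _
  have ent_ac := h.swap_middle.ent_add_total (S := S) fun _ => add_add_add_comm _ _ _ _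
  have ent_bd := h.swap_middle.swap_pairs.ent_add_total (S := S) fun _ => by simp only [S]; abel
  have ent_bc := h'.swap_pairs.ent_add_total (S := S) fun _ => by simp only [S]; abel
  have ent_S : H[S; w] = ent (conv (conv p q) (conv p q)) := by rw [h.push_add_add]
  have sum_ab (ω) : a ω + b ω + (b ω + c ω) = a ω + c ω := ZModModule.add_add_add_cancel _ _ _
  have sum_bc (ω) : b ω + c ω + (b ω + d ω) = c ω + d ω := by
    rw [add_comm (b ω), ZModModule.add_add_add_cancel]
  have sum_ac (ω) : a ω + c ω + (a ω + b ω) = b ω + c ω := by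
    rw [add_comm, add_comm (a ω), ZModModule.add_add_add_cancel]
  have sub_ac (ω) : S ω - (a ω + c ω) = b ω + d ω := by simp only [S]; abel
  have joint_bc := ent_sub_add_triple w (fun ω => a ω + b ω) (fun ω => b ω + c ω) S
  have joint_ac := ent_add_left_triple w (fun ω => a ω + b ω) (fun ω => b ω + c ω) S
  have bsg_ab := hmin.dRuzsa_le_bsg hη hp₀ hq₀ h.isDist S hq hp h.push_add_left
    h'.swap_pairs.push_add_left
  have bsg_bc := hmin.dRuzsa_le_bsg hη hp₀ hq₀ h.isDist S hq hq
    (h'.swap_pairs.push_add_left.trans (conv_comm q p)) h.swap_middle.swap_pairs.push_add_left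
  have bsg_ac := hmin.dRuzsa_le_bsg hη hp₀ hq₀ h.isDist S hp hp h.swap_middle.push_add_left
    (h.push_add_left.trans (conv_comm p q))
  simp only [sum_ab, sub_ac] at joint_bc joint_ac
  simp only [sum_ab, sum_bc, sum_ac, ent_ab, ent_cd, ent_ac, ent_bd, ent_bc, joint_bc, joint_ac,
    ent_S, conv_comm q p] at bsg_ab bsg_bc bsg_ac
  linarith

lemma IsTauMinimizer.dRuzsa_le_fibring_parallel (hmin : IsTauMinimizer p₀ q₀ η p q) (hη : 0 ≤ η)
    (hp₀ : IsDist p₀) (hq₀ : IsDist q₀) (h : IsIndepQuad w a b c d p q p q) :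
    dRuzsa p q ≤ H[fun ω => (a ω + b ω, b ω + c ω, a ω + b ω + (c ω + d ω)); w] -
      (ent (conv p p) + ent (conv q q)) / 2 - (ent p + ent q) +
      η / 2 * (ent (conv p p) + ent (conv q q) - (ent p + ent q)) := by
  have fibring := hmin.dRuzsa_le_fibring hη hp₀ hq₀ h.swap_middle
  have joint := ent_add_sub_add_triple w (fun ω => a ω + b ω) (fun ω => b ω + c ω)
    fun ω => a ω + b ω + (c ω + d ω)
  have sub_ac (ω) : a ω + b ω + (c ω + d ω) - (a ω + c ω) = b ω + d ω := by abel
  simp only [ZModModule.add_add_add_cancel, sub_ac] at joint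
  rw [joint] at fibring
  linarith

theorem IsTauMinimizer.dRuzsa_nonpos (hmin : IsTauMinimizer p₀ q₀ (1 / 9) p q)
    (hp₀ : IsDist p₀) (hq₀ : IsDist q₀) : dRuzsa p q ≤ 0 := by
  have hp := hmin.isDist_left
  have hq := hmin.isDist_right
  have hη : (0 : ℝ) ≤ 1 / 9 := by norm_num
  obtain ⟨w, a, b, c, d, h⟩ := exists_isIndepQuad hp hq hp hq
  have conv_conv : conv (conv p p) (conv q q) = conv (conv p q) (conv p q) := by
    rw [← h.push_add_add, ← h.swap_middle.push_add_add]
    simp only [add_add_add_comm]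
  have bsg := hmin.three_mul_dRuzsa_le hη hp₀ hq₀ h
  have cross := hmin.dRuzsa_le_fibring_cross hη hp₀ hq₀ h
  have parallel := hmin.dRuzsa_le_fibring_parallel hη hp₀ hq₀ h
  have conv_cross := hmin.dRuzsa_le_conv hη hp₀ hq₀ hq hp
  have conv_parallel := hmin.dRuzsa_le_conv hη hp₀ hq₀ hp hq
  rw [conv_comm q p] at conv_cross
  rw [conv_conv] at conv_parallel
  rw [dRuzsa] at *
  linarith

end Endgame

section PolynomialFreimanRuzsa

variable {G : Type*} [AddCommGroup G] [Finite G] {p q : G → ℝ}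

theorem exists_dRuzsa_unifOn_le [Module (ZMod 2) G] (hp : IsDist p) (hq : IsDist q) :
    ∃ V : Submodule (ZMod 2) G,
      dRuzsa p (unifOn (V : Set G)) + dRuzsa q (unifOn (V : Set G)) ≤ 11 * dRuzsa p q := by
  obtain ⟨p₁, q₁, hmin⟩ := exists_isTauMinimizer p q (1 / 9)
  have hp₁ := hmin.isDist_left
  have hq₁ := hmin.isDist_right
  have dist_zero := hmin.dRuzsa_nonpos hp hq
  have dist_zero' := (dRuzsa_comm q₁ p₁).trans_le dist_zero
  obtain ⟨V, x, hV⟩ := exists_eq_translate_unifOn hp₁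
    ((dRuzsa_triangle hp₁ hq₁ hp₁).trans (add_nonpos dist_zero dist_zero'))
  have close : dRuzsa p p₁ + dRuzsa q q₁ ≤ 11 * dRuzsa p q := by
    have swapped := hmin.tau_le q p hq hp
    rw [tau, tau, dRuzsa_comm q p] at swapped
    linarith [dRuzsa_nonneg hp₁ hq₁]
  refine ⟨AddSubgroup.toZModSubmodule 2 V, ?_⟩
  rw [AddSubgroup.coe_toZModSubmodule, ← dRuzsa_translate p _ x, ← dRuzsa_translate q _ x, ← hV]
  linarith [dRuzsa_triangle hq hq₁ hp₁]

lemma ent_push_le_two_mul_dRuzsa {A : Type*} [Finite A] {u : G → ℝ} {f : G → A} (hp : IsDist p)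
    (hu : IsDist u) (hf : ∀ x y, u y ≠ 0 → f (x + y) = f x) : H[f; p] ≤ 2 * dRuzsa p u := by
  have hw := hp.prodDist hu
  have submodular := ent_push_submodular hw.1 (fun z : G × G => z.1 + z.2) Prod.fst fun z => f z.1
  have ent_joint : H[fun z => (z.1 + z.2, z.1, f z.1); prodDist p u] = ent p + ent u := by
    rw [← ent_prodDist hp hu, ← push_id (prodDist p u), push_push]
    exact ent_push_congr fun _ _ _ _ => by simp only [Prod.ext_iff, id]; grind
  have ent_sum : H[fun z => (z.1 + z.2, f z.1); prodDist p u] = ent (conv p u) := by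
    rw [← push_add_prodDist]
    refine ent_push_congr fun z z' hz hz' => ?_
    rw [Prod.mk.injEq, ← hf z.1 z.2 (right_ne_zero_of_mul hz),
      ← hf z'.1 z'.2 (right_ne_zero_of_mul hz')]
    exact and_iff_left_of_imp (congrArg f)
  have ent_fst : H[fun z => (z.1, f z.1); prodDist p u] = ent p := by
    rw [← push_push (fun x => (x, f x)), push_fst_prodDist p hu,
      ent_push_of_injective fun _ _ h => (Prod.ext_iff.1 h).1]
  have ent_image : H[fun z => f z.1; prodDist p u] = H[f; p] := by
    rw [← push_push f, push_fst_prodDist p hu]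
  rw [ent_joint, ent_sum, ent_fst, ent_image] at submodular
  rw [dRuzsa]
  linarith [ent_le_ent_conv_left hp hu]

lemma ent_push_mkQ_le [Module (ZMod 2) G] (hp : IsDist p) (V : Submodule (ZMod 2) G) :
    H[V.mkQ; p] ≤ 2 * dRuzsa p (unifOn (V : Set G)) := by
  have : Finite (G ⧸ V) := Finite.of_surjective _ V.mkQ_surjective
  refine ent_push_le_two_mul_dRuzsa hp (isDist_unifOn ⟨0, V.zero_mem⟩) fun x y hy => ?_
  have hyV : y ∈ V := Set.mem_of_indicator_ne_zero hy
  rw [map_add, V.mkQ_apply y, (Submodule.Quotient.mk_eq_zero V).2 hyV, add_zero]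

lemma ent_le_two_mul_dRuzsa_add (hp : IsDist p) (hq : IsDist q) :
    ent q ≤ 2 * dRuzsa p q + ent p := by
  rw [dRuzsa]
  linarith [ent_le_ent_conv_right hp hq]

end PolynomialFreimanRuzsa

theorem statement6_general {G : Type*} [AddCommGroup G] [Module (ZMod 2) G] [Finite G]
    {p q : G → ℝ} (hp : IsDist p) (hq : IsDist q) :
    ∃ V : Submodule (ZMod 2) G,
      ent (unifOn (V : Set G)) ≤ 6 * (ent p + ent q) ∧
      max (ent (push V.mkQ p)) (ent (push V.mkQ q)) ≤ 12 * dRuzsa p q := by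
  obtain ⟨V, hV⟩ := exists_dRuzsa_unifOn_le hp hq
  have hu : IsDist (unifOn (V : Set G)) := isDist_unifOn ⟨0, V.zero_mem⟩
  have triangle_p := dRuzsa_triangle hp hq hu
  have triangle_q := dRuzsa_triangle hq hp hu
  rw [dRuzsa_comm q p] at triangle_q
  refine ⟨V, ?_, max_le ?_ ?_⟩
  · have dist_le : dRuzsa p q ≤ (ent p + ent q) / 2 := by
      rw [dRuzsa]
      linarith [ent_conv_le hp hq]
    linarith [ent_le_two_mul_dRuzsa_add hp hu, ent_le_two_mul_dRuzsa_add hq hu]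
  · linarith [ent_push_mkQ_le hp V]
  · linarith [ent_push_mkQ_le hq V]

/-- For finitely supported `X, Y` on `𝔽₂ⁿ` there is a subspace `V` with
`H[𝐔_V] ≤ 7(H[X]+H[Y])` and `max{H[π_V(X)], H[π_V(Y)]} ≤ 12 d[X ; Y]`. -/
theorem statement6 (n : ℕ) (p q : Fvec n → ℝ) (hp : IsDist p) (hq : IsDist q) :
    ∃ V : Submodule (ZMod 2) (Fvec n),
      ent (unifOn (V : Set (Fvec n))) ≤ 7 * (ent p + ent q) ∧
      max (ent (push V.mkQ p)) (ent (push V.mkQ q)) ≤ 12 * dRuzsa p q := by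
  obtain ⟨V, hV, hmax⟩ := statement6_general hp hq
  exact ⟨V, hV.trans (by linarith [ent_nonneg hp, ent_nonneg hq]), hmax⟩
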